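/- Let G be a locally compact topological group with left Haar measure λ and right Haar measure ρ given by ρ(B) = λ(B⁻¹). Let P and Q be probability measures on G with densities p and q with respect to λ, and for g, h ∈ G write p_g(h) := p(g⁻¹h) and q_g(h) := q(g⁻¹h). Let N and L be compact subsets of G with L symmetric (L = L⁻¹) and P(L) > 0. Then for every h ∈ N, the ratio of the ρ-integrals over NL satisfies [∫_{NL} q_g(h) dρ(g)] / [∫_{NL} p_g(h) dρ(g)] ≤ 1/P(L); equivalently, the logarithm of this ratio is at most −log P(L). -/

import Mathlib

open MeasureTheory Filter
open scoped Pointwise ENNReal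

theorem restrict_closure_of_compact_aux {G : Type*} [TopologicalSpace G] [R1Space G]
    [MeasurableSpace G] [BorelSpace G] (μ : Measure G) {K : Set G} (hK : IsCompact K) :
    μ.restrict (closure K) = μ.restrict K := by
  refine le_antisymm ?_ (Measure.restrict_mono subset_closure le_rfl)
  refine Measure.le_iff.2 fun s hs => ?_
  rw [Measure.restrict_apply hs, Measure.restrict_apply hs,
    ← measure_toMeasurable (μ := μ) (s ∩ K)]
  apply measure_mono
  have h1 : closure K ⊆ toMeasurable μ (s ∩ K) ∪ sᶜ := by
    apply hK.closure_subset_measurableSet ((measurableSet_toMeasurable _ _).union hs.compl)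
    intro x hx
    by_cases hxs : x ∈ s
    · exact Or.inl (subset_toMeasurable _ _ ⟨hxs, hx⟩)
    · exact Or.inr hxs
  rintro x ⟨hxs, hx⟩
  rcases h1 hx with h | h
  · exact h
  · exact absurd hxs h

/-- **Lemma 15.** Let `G` be a locally compact group with left Haar measure `lam` and
right Haar measure `ρ = lam ∘ (·⁻¹)`.  Let `P` and `Q` be probability measures on `G` with
densities `p` and `q` with respect to `lam`, and write `p_g(h) = p (g⁻¹ h)`,
`q_g(h) = q (g⁻¹ h)`.  Let `N, L` be compact subsets with `L` symmetric and `P L > 0`.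
Then for every `h ∈ N`,
`(∫_{N L} q_g(h) dρ(g)) / (∫_{N L} p_g(h) dρ(g)) ≤ 1 / P L`. -/
theorem lintegral_ratio_le_of_symmetric_compact
    {G : Type*} [Group G] [TopologicalSpace G] [IsTopologicalGroup G]
    [LocallyCompactSpace G] [MeasurableSpace G] [BorelSpace G]
    (lam : Measure G) [lam.IsHaarMeasure]
    (p q : G → ℝ≥0∞) (hp : Measurable p) (hq : Measurable q)
    (P Q : Measure G) [IsProbabilityMeasure P] [IsProbabilityMeasure Q]
    (hP : P = lam.withDensity p) (hQ : Q = lam.withDensity q)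
    (N L : Set G) (hN : IsCompact N) (hL : IsCompact L)
    (hLsym : L = L⁻¹) (hLpos : 0 < P L) :
    ∀ h ∈ N,
      (∫⁻ g in N * L, q (g⁻¹ * h) ∂(lam.map (·⁻¹)))
          / (∫⁻ g in N * L, p (g⁻¹ * h) ∂(lam.map (·⁻¹)))
        ≤ 1 / P L := by
  intro h hh
  let e : G ≃ₜ G := (Homeomorph.inv G).trans (Homeomorph.mulRight h)
  have he : ∀ g, e g = g⁻¹ * h := fun g => rfl
  set D : Set G := e '' (N * L) with hD
  have hDc : IsCompact D := (hN.mul hL).image e.continuous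
  have hpre : e ⁻¹' D = N * L := e.injective.preimage_image _
  set ν : Measure G := lam.map (· * h) with hν
  have hmap : (lam.map (·⁻¹)).map e.toMeasurableEquiv = ν := by
    rw [Measure.map_map e.toMeasurableEquiv.measurable measurable_inv]
    congr 1
    funext g
    simp [he]
  have key : ∀ f : G → ℝ≥0∞,
      ∫⁻ g in N * L, f (g⁻¹ * h) ∂(lam.map (·⁻¹)) = ∫⁻ g in D, f g ∂ν := by
    intro f
    rw [← hmap, MeasurableEquiv.restrict_map, lintegral_map_equiv]
    have : e.toMeasurableEquiv ⁻¹' D = N * L := hpre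
    rw [this]
    rfl
  haveI : ν.IsHaarMeasure := Measure.isHaarMeasure_map_mul_right lam h
  set c := Measure.haarScalarFactor ν lam with hc
  have hc0 : 0 < c := Measure.haarScalarFactor_pos_of_isHaarMeasure ν lam
  have hres : ν.restrict D = c • lam.restrict D := by
    ext s hs
    rw [Measure.smul_apply, Measure.restrict_apply hs, Measure.restrict_apply hs]
    exact Measure.measure_isMulInvariant_eq_smul_of_isCompact_closure ν lam
      (hDc.closure_of_subset Set.inter_subset_right)
  have key2 : ∀ f : G → ℝ≥0∞, ∫⁻ g in D, f g ∂ν = (c : ℝ≥0∞) * (lam.withDensity f) D := by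
    intro f
    rw [hres, lintegral_smul_measure, ← hDc.measure_closure,
      withDensity_apply _ isClosed_closure.measurableSet, restrict_closure_of_compact_aux lam hDc]
    rfl
  rw [key, key, key2, key2, ← hP, ← hQ]
  have hLD : L ⊆ D := by
    intro l hl
    refine ⟨h * l⁻¹, Set.mul_mem_mul hh ?_, by simp [he]⟩
    rw [hLsym]
    simpa using hl
  rw [ENNReal.mul_div_mul_left _ _ (by exact_mod_cast hc0.ne') ENNReal.coe_ne_top]
  exact ENNReal.div_le_div prob_le_one (measure_mono hLD)
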